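/- Let n ≥ 5 and let Z ∈ ℝ^{n×4} be totally positive with rows Z_1,…,Z_n, indexed cyclically so that Z_{n+1} = Z_1 and Z_0 = Z_n. Assume additionally that there is no rank-2 matrix W ∈ ℝ^{2×4} for which more than four of the n determinants det(W_1, W_2, Z_i, Z_{i+1}) (i = 1,…,n, indices mod n) vanish. Let i, j be residues modulo n with {i−1,i,i+1} ∩ {j,j+1} = ∅ (computed modulo n). Then there is no totally nonnegative matrix X ∈ ℝ^{2×n} with rank(X·Z) = 2 such that both rows of X·Z lie in the linear span of Z_{i−1}, Z_i, Z_{i+1} and the determinant of the 4×4 matrix whose rows are the two rows of X·Z followed by Z_j and Z_{j+1} vanishes. -/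

import Mathlib

/-!
Write `Y = X Z`, and `M a b = X₀ₐ X₁ᵦ - X₀ᵦ X₁ₐ` for the minors of `X`.

The hypotheses are invariant under the twisted cyclic shift
`(Z₁, …, Zₙ) ↦ (Z₂, …, Zₙ, -Z₁)`, applied simultaneously to the columns of `X`: it preserves the
positivity of both matrices and the product `X Z`. Hence the plane containing `Y` may be taken to
be spanned by the first three rows `Z₀, Z₁, Z₂` (`no_plane_solution`).

In that position (`no_plane_solution_zero`) put `q k = det (Z₀, Z₁, Z₂, Zₖ)`, which is positive
for `k ≥ 3` and zero for `k < 3`. The plane condition says `∑ q k • Xₖ = 0` over the columns `Xₖ`,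
hence `∑ q k * M a k = 0` for every `a`.
* If `a < 3`, all terms are nonnegative, so `M a k = 0` for all `k ≥ 3`.
* If `a ≥ 3` is the first index beyond `2` with `Xₐ ≠ 0`, all terms are again nonnegative, so
  `M a k = 0` for `k ≥ 3`. Every column is then parallel to `Xₐ ≠ 0`, against `rank Y = 2`.

So `X` is supported on its first three columns, and by Cauchy–Binet
`det (Y, Z_j, Z_{j+1}) = ∑_{a < b < 3} M a b * det (Z_a, Z_b, Z_j, Z_{j+1})` with positive
determinants and nonnegative minors. If it vanishes, every minor of `X` vanishes, which again
contradicts `rank Y = 2`.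
-/

/-- The determinant of the 4×4 matrix with the given four rows. -/
noncomputable def det4 (a b c d : Fin 4 → ℝ) : ℝ :=
  Matrix.det (Matrix.of ![a, b, c, d])

/-- `Z ∈ ℝ^{n×4}` is totally positive: every `4×4` minor formed by rows `i₁<i₂<i₃<i₄`
is positive. -/
def IsTotallyPositive4 {n : ℕ} (Z : Matrix (Fin n) (Fin 4) ℝ) : Prop :=
  ∀ r : Fin 4 → Fin n, StrictMono r → 0 < ((Z.submatrix r id).det)

/-- `X ∈ ℝ^{2×n}` is totally nonnegative: every `2×2` minor formed by columns `i<j`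
is nonnegative. -/
def IsTotallyNonneg2 {n : ℕ} (X : Matrix (Fin 2) (Fin n) ℝ) : Prop :=
  ∀ i j : Fin n, i < j → 0 ≤ X 0 i * X 1 j - X 0 j * X 1 i

/-! ### Multilinearity of `det4` and minors -/

lemma det4_expand (a b c d : Fin 4 → ℝ) : det4 a b c d =
    a 0 * (b 1 * (c 2 * d 3 - c 3 * d 2) - b 2 * (c 1 * d 3 - c 3 * d 1)
      + b 3 * (c 1 * d 2 - c 2 * d 1))
    - a 1 * (b 0 * (c 2 * d 3 - c 3 * d 2) - b 2 * (c 0 * d 3 - c 3 * d 0)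
      + b 3 * (c 0 * d 2 - c 2 * d 0))
    + a 2 * (b 0 * (c 1 * d 3 - c 3 * d 1) - b 1 * (c 0 * d 3 - c 3 * d 0)
      + b 3 * (c 0 * d 1 - c 1 * d 0))
    - a 3 * (b 0 * (c 1 * d 2 - c 2 * d 1) - b 1 * (c 0 * d 2 - c 2 * d 0)
      + b 2 * (c 0 * d 1 - c 1 * d 0)) := by
  simp [det4, Matrix.det_succ_row_zero, Fin.sum_univ_succ, Fin.succAbove]
  ring

lemma det4_smul (s t u v : ℝ) (a b c d : Fin 4 → ℝ) :
    det4 (s • a) (t • b) (u • c) (v • d) = s * t * u * v * det4 a b c d := by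
  simp only [det4_expand, Pi.smul_apply, smul_eq_mul]
  ring

lemma det4_rotate (a b c d : Fin 4 → ℝ) : det4 b c d a = -det4 a b c d := by
  simp only [det4_expand]
  ring

lemma det4_eq_zero_of_mem_span {y a b c : Fin 4 → ℝ}
    (h : y ∈ Submodule.span ℝ ({a, b, c} : Set (Fin 4 → ℝ))) : det4 y a b c = 0 := by
  obtain ⟨s, t, u, rfl⟩ := Submodule.mem_span_triple.1 h
  simp only [det4_expand, Pi.add_apply, Pi.smul_apply, smul_eq_mul]
  ring

lemma IsTotallyPositive4.det4_pos {n : ℕ} {Z : Matrix (Fin n) (Fin 4) ℝ}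
    (hZ : IsTotallyPositive4 Z) {a b c d : Fin n} (hab : a < b) (hbc : b < c) (hcd : c < d) :
    0 < det4 (Z a) (Z b) (Z c) (Z d) := by
  have hmono : StrictMono ![a, b, c, d] := by
    rw [Fin.strictMono_iff_lt_succ]
    intro k
    fin_cases k
    · exact hab
    · exact hbc
    · exact hcd
  have h := hZ ![a, b, c, d] hmono
  have e : Z.submatrix ![a, b, c, d] id = Matrix.of ![Z a, Z b, Z c, Z d] := by
    ext k l
    fin_cases k <;> rfl
  rwa [e] at h

lemma exists_minor_ne_zero {n : ℕ} {X : Matrix (Fin 2) (Fin n) ℝ} (h : X.rank = 2) :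
    ∃ a b, X 0 a * X 1 b - X 0 b * X 1 a ≠ 0 := by
  by_contra! hM
  have hli : LinearIndependent ℝ X.row := by
    rw [linearIndependent_iff_card_eq_finrank_span, Set.finrank, ← Matrix.rank_eq_finrank_span_row,
      h, Fintype.card_fin]
  have e : X.row = ![X 0, X 1] := by
    ext k l
    fin_cases k <;> rfl
  rw [e] at hli
  have hli' := LinearIndependent.pair_iff.1 hli
  have h0 : ∀ k, X 0 k = 0 := by
    intro k
    have := hli' (X 1 k) (-X 0 k) (by
      ext l
      simp only [Pi.add_apply, Pi.smul_apply, smul_eq_mul, Pi.zero_apply]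
      linarith [hM l k])
    linarith [this.2]
  have := hli' 1 0 (by ext l; simp [h0])
  exact one_ne_zero this.1

/-- If a column of `X` is nonzero and parallel to all the columns, then all minors vanish. -/
lemma minor_eq_zero_of_parallel {n : ℕ} {X : Matrix (Fin 2) (Fin n) ℝ} {a : Fin n}
    (ha : ¬ (X 0 a = 0 ∧ X 1 a = 0)) (hM : ∀ k, X 0 a * X 1 k - X 0 k * X 1 a = 0) (b c : Fin n) :
    X 0 b * X 1 c - X 0 c * X 1 b = 0 := by
  by_cases h : X 0 a = 0
  · have h1 : X 1 a ≠ 0 := fun h1 => ha ⟨h, h1⟩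
    have hz : ∀ k, X 0 k = 0 := by
      intro k
      have := hM k
      simp only [h, zero_mul, zero_sub, neg_eq_zero, mul_eq_zero] at this
      tauto
    simp [hz]
  · have : X 0 a * (X 0 b * X 1 c - X 0 c * X 1 b) = 0 := by
      linear_combination X 0 b * hM c - X 0 c * hM b
    exact (mul_eq_zero.1 this).resolve_left h

lemma det4_mul_row {n : ℕ} (X : Matrix (Fin 2) (Fin n) ℝ) (Z : Matrix (Fin n) (Fin 4) ℝ)
    (r : Fin 2) (u v w : Fin 4 → ℝ) :
    det4 ((X * Z) r) u v w = ∑ k, X r k * det4 (Z k) u v w := by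
  simp only [det4_expand, Matrix.mul_apply, Finset.sum_mul, ← Finset.sum_add_distrib,
    ← Finset.sum_sub_distrib]
  exact Finset.sum_congr rfl fun k _ => by ring

/-! ### The plane spanned by the first three rows -/

/-- The case in which the plane is spanned by the first three rows of `Z`. -/
lemma no_plane_solution_zero {n : ℕ} {Z : Matrix (Fin n) (Fin 4) ℝ} (hZ : IsTotallyPositive4 Z)
    {X : Matrix (Fin 2) (Fin n) ℝ} (hX : IsTotallyNonneg2 X)
    (hr : ∃ a b, X 0 a * X 1 b - X 0 b * X 1 a ≠ 0)
    {p₀ p₁ p₂ j j' : Fin n} (h₀ : p₀.val = 0) (h₁ : p₁.val = 1) (h₂ : p₂.val = 2)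
    (hj : 3 ≤ j.val) (hjj' : j < j')
    (hP : ∀ r, det4 ((X * Z) r) (Z p₀) (Z p₁) (Z p₂) = 0)
    (hd : det4 ((X * Z) 0) ((X * Z) 1) (Z j) (Z j') = 0) : False := by
  have h01 : p₀ < p₁ := by rw [Fin.lt_def]; omega
  have h12 : p₁ < p₂ := by rw [Fin.lt_def]; omega
  have hsmall : ∀ k : Fin n, k.val < 3 → k = p₀ ∨ k = p₁ ∨ k = p₂ := by
    intro k hk
    simp only [Fin.ext_iff]
    omega
  obtain ⟨q, hq⟩ : ∃ q : Fin n → ℝ, ∀ k, q k = -det4 (Z k) (Z p₀) (Z p₁) (Z p₂) :=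
    ⟨_, fun _ => rfl⟩
  have hq0 : ∀ k : Fin n, k.val < 3 → q k = 0 := by
    intro k hk
    rw [hq]
    rcases hsmall k hk with rfl | rfl | rfl <;> simp only [det4_expand] <;> ring
  have hqpos : ∀ k : Fin n, 3 ≤ k.val → 0 < q k := by
    intro k hk
    rw [hq, ← det4_rotate]
    exact hZ.det4_pos h01 h12 (by rw [Fin.lt_def]; omega)
  have hsum : ∀ r, ∑ k, X r k * q k = 0 := by
    intro r
    have := hP r
    rw [det4_mul_row] at this
    simp only [hq, mul_neg, Finset.sum_neg_distrib, this, neg_zero]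
  have hsumM : ∀ a, ∑ k, q k * (X 0 a * X 1 k - X 0 k * X 1 a) = 0 := by
    intro a
    have : ∑ k, q k * (X 0 a * X 1 k - X 0 k * X 1 a)
        = X 0 a * ∑ k, X 1 k * q k - X 1 a * ∑ k, X 0 k * q k := by
      rw [Finset.mul_sum, Finset.mul_sum, ← Finset.sum_sub_distrib]
      exact Finset.sum_congr rfl fun k _ => by ring
    rw [this, hsum, hsum]
    ring
  -- A sum of nonnegative terms that vanishes has only zero terms.
  have key : ∀ a : Fin n, (∀ k : Fin n, 3 ≤ k.val → 0 ≤ X 0 a * X 1 k - X 0 k * X 1 a) →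
      ∀ k : Fin n, 3 ≤ k.val → X 0 a * X 1 k - X 0 k * X 1 a = 0 := by
    intro a ha k hk
    have hnn : ∀ k ∈ Finset.univ, 0 ≤ q k * (X 0 a * X 1 k - X 0 k * X 1 a) := by
      intro k _
      rcases Nat.lt_or_ge k.val 3 with h | h
      · simp [hq0 k h]
      · exact mul_nonneg (hqpos k h).le (ha k h)
    have := (Finset.sum_eq_zero_iff_of_nonneg hnn).1 (hsumM a) k (Finset.mem_univ k)
    exact (mul_eq_zero.1 this).resolve_left (hqpos k hk).ne'
  have hlow : ∀ a k : Fin n, a.val < 3 → 3 ≤ k.val → X 0 a * X 1 k - X 0 k * X 1 a = 0 :=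
    fun a k ha hk => key a (fun k hk => hX a k (by rw [Fin.lt_def]; omega)) k hk
  have hzero : ∀ m : ℕ, ∀ a : Fin n, a.val = m → 3 ≤ m → X 0 a = 0 ∧ X 1 a = 0 := by
    intro m
    induction m using Nat.strong_induction_on with
    | _ m ih =>
      intro a ham hm
      by_contra hne
      have hpar : ∀ k, X 0 a * X 1 k - X 0 k * X 1 a = 0 := by
        intro k
        rcases Nat.lt_or_ge k.val 3 with h | h
        · linarith [hlow k a h (by omega)]
        · refine key a (fun l hl => ?_) k h
          rcases lt_trichotomy l a with hla | rfl | hla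
          · obtain ⟨e0, e1⟩ := ih l.val (by rw [Fin.lt_def] at hla; omega) l rfl hl
            simp [e0, e1]
          · simp
          · exact hX a l hla
      obtain ⟨b, c, hbc⟩ := hr
      exact hbc (minor_eq_zero_of_parallel hne hpar b c)
  have hY : ∀ r c, (X * Z) r c = X r p₀ * Z p₀ c + X r p₁ * Z p₁ c + X r p₂ * Z p₂ c := by
    intro r c
    rw [Matrix.mul_apply, ← Finset.sum_subset (Finset.subset_univ {p₀, p₁, p₂}),
      Finset.sum_insert, Finset.sum_insert, Finset.sum_singleton]
    · ring
    · simpa using h12.ne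
    · simpa using ⟨h01.ne, (h01.trans h12).ne⟩
    · intro k _ hk
      have hk3 : 3 ≤ k.val := by
        by_contra hlt
        have := hsmall k (by omega)
        simp at hk
        tauto
      have := hzero _ k rfl hk3
      fin_cases r
      · simp [this.1]
      · simp [this.2]
  have hexp : det4 ((X * Z) 0) ((X * Z) 1) (Z j) (Z j') =
      (X 0 p₀ * X 1 p₁ - X 0 p₁ * X 1 p₀) * det4 (Z p₀) (Z p₁) (Z j) (Z j')
      + (X 0 p₀ * X 1 p₂ - X 0 p₂ * X 1 p₀) * det4 (Z p₀) (Z p₂) (Z j) (Z j')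
      + (X 0 p₁ * X 1 p₂ - X 0 p₂ * X 1 p₁) * det4 (Z p₁) (Z p₂) (Z j) (Z j') := by
    simp only [det4_expand, hY]
    ring
  have h2j : p₂ < j := by rw [Fin.lt_def]; omega
  have d01 := hZ.det4_pos h01 (h12.trans h2j) hjj'
  have d02 := hZ.det4_pos (h01.trans h12) h2j hjj'
  have d12 := hZ.det4_pos h12 h2j hjj'
  have m01 := hX _ _ h01
  have m02 := hX _ _ (h01.trans h12)
  have m12 := hX _ _ h12
  have t01 := mul_nonneg m01 d01.le
  have t02 := mul_nonneg m02 d02.le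
  have t12 := mul_nonneg m12 d12.le
  rw [hd] at hexp
  have z01 : X 0 p₀ * X 1 p₁ - X 0 p₁ * X 1 p₀ = 0 :=
    (mul_eq_zero.1 (le_antisymm (by linarith) t01)).resolve_right d01.ne'
  have z02 : X 0 p₀ * X 1 p₂ - X 0 p₂ * X 1 p₀ = 0 :=
    (mul_eq_zero.1 (le_antisymm (by linarith) t02)).resolve_right d02.ne'
  have z12 : X 0 p₁ * X 1 p₂ - X 0 p₂ * X 1 p₁ = 0 :=
    (mul_eq_zero.1 (le_antisymm (by linarith) t12)).resolve_right d12.ne'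
  obtain ⟨a, b, hab⟩ := hr
  apply hab
  rcases Nat.lt_or_ge a.val 3 with ha | ha
  · rcases Nat.lt_or_ge b.val 3 with hb | hb
    · rcases hsmall a ha with rfl | rfl | rfl <;> rcases hsmall b hb with rfl | rfl | rfl <;>
        linarith
    · obtain ⟨e0, e1⟩ := hzero _ b rfl hb
      simp [e0, e1]
  · obtain ⟨e0, e1⟩ := hzero _ a rfl ha
    simp [e0, e1]

/-! ### The twisted cyclic shift -/

/-- The sign attached to the `k`-th index by the twisted cyclic shift. -/
noncomputable def shiftSign {m : ℕ} (k : Fin (m + 1)) : ℝ := if k = Fin.last m then -1 else 1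

lemma shiftSign_mul_self {m : ℕ} (k : Fin (m + 1)) : shiftSign k * shiftSign k = 1 := by
  unfold shiftSign
  split_ifs <;> norm_num

lemma shiftSign_ne_zero {m : ℕ} (k : Fin (m + 1)) : shiftSign k ≠ 0 := by
  unfold shiftSign
  split_ifs <;> norm_num

lemma shiftSign_of_lt {m : ℕ} {k l : Fin (m + 1)} (h : k < l) : shiftSign k = 1 :=
  if_neg (h.trans_le (Fin.le_last l)).ne

/-- The twisted cyclic shift `(Z₀, …, Zₘ) ↦ (Z₁, …, Zₘ, -Z₀)` of the rows of `Z`. -/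
noncomputable def shiftRows {m : ℕ} (Z : Matrix (Fin (m + 1)) (Fin 4) ℝ) :
    Matrix (Fin (m + 1)) (Fin 4) ℝ := fun k => shiftSign k • Z (k + 1)

/-- The twisted cyclic shift `(X₀, …, Xₘ) ↦ (X₁, …, Xₘ, -X₀)` of the columns of `X`. -/
noncomputable def shiftCols {m : ℕ} (X : Matrix (Fin 2) (Fin (m + 1)) ℝ) :
    Matrix (Fin 2) (Fin (m + 1)) ℝ := fun r k => shiftSign k * X r (k + 1)

lemma shiftCols_mul_shiftRows {m : ℕ} (X : Matrix (Fin 2) (Fin (m + 1)) ℝ)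
    (Z : Matrix (Fin (m + 1)) (Fin 4) ℝ) : shiftCols X * shiftRows Z = X * Z := by
  ext r c
  rw [Matrix.mul_apply, Matrix.mul_apply,
    ← Equiv.sum_comp (Equiv.addRight (1 : Fin (m + 1))) fun k => X r k * Z k c]
  refine Finset.sum_congr rfl fun k _ => ?_
  simp only [shiftCols, shiftRows, Pi.smul_apply, smul_eq_mul, Equiv.coe_addRight]
  linear_combination X r (k + 1) * Z (k + 1) c * shiftSign_mul_self k

lemma add_one_lt_add_one {m : ℕ} {a b : Fin (m + 1)} (h : a < b) (hb : b ≠ Fin.last m) :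
    a + 1 < b + 1 := by
  have ha : a ≠ Fin.last m := (h.trans_le (Fin.le_last b)).ne
  rw [Fin.lt_def] at h ⊢
  rw [Fin.val_add_one, Fin.val_add_one, if_neg ha, if_neg hb]
  omega

lemma zero_lt_add_one {m : ℕ} {a b : Fin (m + 1)} (h : a < b) : 0 < a + 1 := by
  have ha : a ≠ Fin.last m := (h.trans_le (Fin.le_last b)).ne
  rw [Fin.lt_def, Fin.val_add_one, if_neg ha]
  simp

lemma IsTotallyPositive4.shiftRows {m : ℕ} {Z : Matrix (Fin (m + 1)) (Fin 4) ℝ}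
    (hZ : IsTotallyPositive4 Z) : IsTotallyPositive4 (shiftRows Z) := by
  intro r hr
  have hab : r 0 < r 1 := hr (by decide)
  have hbc : r 1 < r 2 := hr (by decide)
  have hcd : r 2 < r 3 := hr (by decide)
  have e : (_root_.shiftRows Z).submatrix r id = Matrix.of
      ![shiftSign (r 0) • Z (r 0 + 1), shiftSign (r 1) • Z (r 1 + 1),
        shiftSign (r 2) • Z (r 2 + 1), shiftSign (r 3) • Z (r 3 + 1)] := by
    ext k l
    fin_cases k <;> rfl
  rw [e]
  change 0 < det4 _ _ _ _
  rw [det4_smul, shiftSign_of_lt hab, shiftSign_of_lt hbc, shiftSign_of_lt hcd]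
  by_cases hd : r 3 = Fin.last m
  · have h0 : r 3 + 1 = 0 := by rw [hd, Fin.last_add_one]
    rw [h0, det4_rotate, shiftSign, if_pos hd]
    have := hZ.det4_pos (zero_lt_add_one hab)
      (add_one_lt_add_one hab (hbc.trans_le (Fin.le_last _)).ne)
      (add_one_lt_add_one hbc (hcd.trans_le (Fin.le_last _)).ne)
    linarith
  · have := hZ.det4_pos (add_one_lt_add_one hab (hbc.trans_le (Fin.le_last _)).ne)
      (add_one_lt_add_one hbc (hcd.trans_le (Fin.le_last _)).ne) (add_one_lt_add_one hcd hd)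
    rw [shiftSign, if_neg hd]
    linarith

lemma IsTotallyNonneg2.shiftCols {m : ℕ} {X : Matrix (Fin 2) (Fin (m + 1)) ℝ}
    (hX : IsTotallyNonneg2 X) : IsTotallyNonneg2 (shiftCols X) := by
  intro a b hab
  simp only [_root_.shiftCols, shiftSign_of_lt hab]
  by_cases hb : b = Fin.last m
  · have h0 : b + 1 = 0 := by rw [hb, Fin.last_add_one]
    rw [h0, shiftSign, if_pos hb]
    linarith [hX _ _ (zero_lt_add_one hab)]
  · rw [shiftSign, if_neg hb]
    linarith [hX _ _ (add_one_lt_add_one hab hb)]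

/-! ### Reduction by shifting -/

/-- The plane spanned by three cyclically consecutive rows `Z p`, `Z (p + 1)`, `Z (p + 2)` can be
moved to the first three rows by `p` twisted cyclic shifts. -/
lemma no_plane_solution {m : ℕ} (hm : 2 ≤ m) (t : ℕ) :
    ∀ {Z : Matrix (Fin (m + 1)) (Fin 4) ℝ}, IsTotallyPositive4 Z →
    ∀ {X : Matrix (Fin 2) (Fin (m + 1)) ℝ}, IsTotallyNonneg2 X →
    (∃ a b, X 0 a * X 1 b - X 0 b * X 1 a ≠ 0) →
    ∀ {p j : Fin (m + 1)}, p.val = t →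
    j ≠ p → j ≠ p + 1 → j ≠ p + 1 + 1 → j + 1 ≠ p →
    (∀ r, det4 ((X * Z) r) (Z p) (Z (p + 1)) (Z (p + 1 + 1)) = 0) →
    det4 ((X * Z) 0) ((X * Z) 1) (Z j) (Z (j + 1)) = 0 → False := by
  induction t with
  | zero =>
    intro Z hZ X hX hr p j hp hj0 hj1 hj2 hj3 hP hd
    have v1 : (p + 1).val = 1 := by
      rw [Fin.val_add_one, if_neg (by rw [Fin.ext_iff, Fin.val_last]; omega), hp]
    have v2 : (p + 1 + 1).val = 2 := by
      rw [Fin.val_add_one, if_neg (by rw [Fin.ext_iff, Fin.val_last]; omega), v1]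
    have hlast : j ≠ Fin.last m := by
      rintro rfl
      apply hj3
      rw [Fin.last_add_one]
      exact (Fin.ext (by simpa using hp)).symm
    refine no_plane_solution_zero hZ hX hr hp v1 v2 ?_ ?_ hP hd
    · rw [Ne, Fin.ext_iff] at hj0 hj1 hj2
      omega
    · rw [Fin.lt_def, Fin.val_add_one, if_neg hlast]
      omega
  | succ t ih =>
    intro Z hZ X hX hr p j hp hj0 hj1 hj2 hj3 hP hd
    obtain ⟨p, rfl⟩ : ∃ p', p = p' + 1 := ⟨p - 1, by simp⟩
    obtain ⟨j, rfl⟩ : ∃ j', j = j' + 1 := ⟨j - 1, by simp⟩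
    refine ih hZ.shiftRows hX.shiftCols ?_ (p := p) (j := j) ?_ ?_ ?_ ?_ ?_ ?_ ?_
    · obtain ⟨a, b, hab⟩ := hr
      refine ⟨a - 1, b - 1, ?_⟩
      simp only [shiftCols, sub_add_cancel]
      have : shiftSign (a - 1) * shiftSign (b - 1) * (X 0 a * X 1 b - X 0 b * X 1 a) ≠ 0 :=
        mul_ne_zero (mul_ne_zero (shiftSign_ne_zero _) (shiftSign_ne_zero _)) hab
      intro h
      apply this
      linear_combination h
    · rw [Fin.val_add_one] at hp
      split_ifs at hp
      omega
    · exact fun h => hj0 (by rw [h])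
    · exact fun h => hj1 (by rw [h])
    · exact fun h => hj2 (by rw [h])
    · exact fun h => hj3 (by rw [h])
    · intro r
      have := det4_smul 1 (shiftSign p) (shiftSign (p + 1)) (shiftSign (p + 1 + 1))
        ((X * Z) r) (Z (p + 1)) (Z (p + 1 + 1)) (Z (p + 1 + 1 + 1))
      rw [hP r, mul_zero, one_smul] at this
      rw [shiftCols_mul_shiftRows]
      exact this
    · have := det4_smul 1 1 (shiftSign j) (shiftSign (j + 1))
        ((X * Z) 0) ((X * Z) 1) (Z (j + 1)) (Z (j + 1 + 1))
      rw [hd, mul_zero, one_smul, one_smul] at this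
      rw [shiftCols_mul_shiftRows]
      exact this

/-- For `n ≥ 5`, `Z` totally positive (cyclically indexed rows) and generic in
the sense that no rank-2 matrix `W ∈ ℝ^{2×4}` makes more than four of the `n` brackets
`⟨W Z_i Z_{i+1}⟩` vanish, and residues `i, j` with `{i-1,i,i+1} ∩ {j,j+1} = ∅`, there is no
totally nonnegative `X ∈ ℝ^{2×n}` with `rank(X·Z) = 2` such that both rows of `X·Z` lie in the
span of `Z_{i-1}, Z_i, Z_{i+1}` and the bracket `⟨(X·Z) Z_j Z_{j+1}⟩` vanishes. -/
theorem stmt3 (n : ℕ) [NeZero n] (hn : 5 ≤ n)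
    (Z : Matrix (Fin n) (Fin 4) ℝ) (hZ : IsTotallyPositive4 Z)
    (hgen : ∀ W : Matrix (Fin 2) (Fin 4) ℝ, W.rank = 2 →
      Set.ncard {i : Fin n | det4 (W 0) (W 1) (Z i) (Z (i + 1)) = 0} ≤ 4)
    (i j : Fin n)
    (hij : ({i - 1, i, i + 1} : Finset (Fin n)) ∩ {j, j + 1} = ∅) :
    ¬ ∃ X : Matrix (Fin 2) (Fin n) ℝ, IsTotallyNonneg2 X ∧ (X * Z).rank = 2 ∧
      (X * Z) 0 ∈ Submodule.span ℝ ({Z (i - 1), Z i, Z (i + 1)} : Set (Fin 4 → ℝ)) ∧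
      (X * Z) 1 ∈ Submodule.span ℝ ({Z (i - 1), Z i, Z (i + 1)} : Set (Fin 4 → ℝ)) ∧
      det4 ((X * Z) 0) ((X * Z) 1) (Z j) (Z (j + 1)) = 0 := by
  rintro ⟨X, hX, hrank, h0, h1, hd⟩
  obtain ⟨m, rfl⟩ : ∃ m, n = m + 1 := ⟨n - 1, by omega⟩
  have hXrank : X.rank = 2 := by
    have h1 := Matrix.rank_mul_le_left X Z
    have h2 := X.rank_le_height
    omega
  have hdisj : ∀ k, k = i - 1 ∨ k = i ∨ k = i + 1 → k ≠ j ∧ k ≠ j + 1 := by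
    intro k hk
    have : k ∉ ({i - 1, i, i + 1} : Finset (Fin (m + 1))) ∩ {j, j + 1} := by simp [hij]
    simp only [Finset.mem_inter, Finset.mem_insert, Finset.mem_singleton] at this
    tauto
  have e1 : i - 1 + 1 = i := sub_add_cancel i 1
  refine no_plane_solution (by omega) _ hZ hX (exists_minor_ne_zero hXrank) (p := i - 1) (j := j)
    rfl ?_ ?_ ?_ ?_ ?_ hd
  · exact (hdisj (i - 1) (by tauto)).1.symm
  · rw [e1]
    exact (hdisj i (by tauto)).1.symm
  · rw [e1]
    exact (hdisj (i + 1) (by tauto)).1.symm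
  · exact (hdisj (i - 1) (by tauto)).2.symm
  · intro r
    rw [e1]
    fin_cases r
    · exact det4_eq_zero_of_mem_span h0
    · exact det4_eq_zero_of_mem_span h1
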